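/- (Key identity in the proof of Lemma 3.5) For every integer ν ∈ ℤ and all natural numbers t, λ ∈ ℕ, the following identity holds in ℚ(v): [ν−t ∣ λ] · [ν ∣ t] = Σ_{j=0}^{λ} Σ_{c=0}^{min(t,j)} v^{ν(λ−j−c) + 2jt} · [−t ∣ λ−j] · [ν ∣ t+j−c] · [t+j−c ; c, t−c, j−c]. -/

import Mathlib

open Finset

noncomputable section

/-- The field `ℚ(v)` of rational functions over `ℚ`. -/
abbrev K : Type := RatFunc ℚ

/-- The indeterminate `v`. -/
def v : K := RatFunc.X

/-- `[i] = (v^i - v^{-i})/(v - v^{-1})`. -/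
def qint (i : ℤ) : K := (v ^ i - v ^ (-i)) / (v - v⁻¹)

/-- `[t]! = [1][2]⋯[t]`. -/
def qfact (t : ℕ) : K := ∏ s ∈ Finset.range t, qint (s + 1)

/-- The Gaussian binomial coefficient `[N ∣ t] = ([N][N-1]⋯[N-t+1])/[t]!`. -/
def qbinom (N : ℤ) (t : ℕ) : K := (∏ s ∈ Finset.range t, qint (N - s)) / qfact t

/-- The q-trinomial coefficient `[a+b+c ; a, b, c] = [a+b+c]!/([a]![b]![c]!)`. -/
def qtri (a b c : ℕ) : K := qfact (a + b + c) / (qfact a * qfact b * qfact c)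

theorem v_ne : v ≠ 0 := RatFunc.X_ne_zero

theorem v_pow_ne (n : ℕ) (hn : n ≠ 0) : v ^ n ≠ 1 := by
  intro h
  have h2 : algebraMap (Polynomial ℚ) (RatFunc ℚ) (Polynomial.X ^ n) =
      algebraMap (Polynomial ℚ) (RatFunc ℚ) 1 := by
    rw [map_pow, RatFunc.algebraMap_X, map_one]; exact h
  have h3 := RatFunc.algebraMap_injective ℚ h2
  have h4 := congrArg Polynomial.natDegree h3
  simp at h4
  exact hn h4

theorem v_sub_ne : v - v⁻¹ ≠ 0 := by
  intro h
  apply v_pow_ne 2 (by norm_num)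
  have := v_ne
  field_simp at h
  linear_combination h

theorem qint_ne (n : ℕ) : qint ((n : ℤ) + 1) ≠ 0 := by
  unfold qint
  refine div_ne_zero ?_ v_sub_ne
  intro h
  apply v_pow_ne (2 * (n + 1)) (by omega)
  have h1 : v ^ ((n : ℤ) + 1) = v ^ (n + 1) := by
    rw [← zpow_natCast]; push_cast; rfl
  rw [zpow_neg, h1] at h
  have h0 : v ^ (n + 1) ≠ 0 := pow_ne_zero _ v_ne
  have h3 : v ^ (n + 1) * (v ^ (n + 1))⁻¹ = 1 := mul_inv_cancel₀ h0
  rw [two_mul, pow_add]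
  linear_combination v ^ (n + 1) * h + h3

theorem qfact_ne (n : ℕ) : qfact n ≠ 0 := by
  unfold qfact
  exact Finset.prod_ne_zero_iff.mpr fun s _ => qint_ne s

theorem qint_add (a b : ℤ) : qint (a + b) = v ^ (-b) * qint a + v ^ a * qint b := by
  unfold qint
  rw [← mul_div_assoc, ← mul_div_assoc, ← add_div]
  congr 1
  rw [mul_sub, mul_sub]
  simp only [← zpow_add₀ v_ne]
  rw [show -b + a = a + -b by ring, show -b + -a = -(a + b) by ring]
  ring

theorem qbinom_zero (N : ℤ) : qbinom N 0 = 1 := by simp [qbinom, qfact]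

theorem qbinom_succ (N : ℤ) (k : ℕ) :
    qint ((k : ℤ) + 1) * qbinom N (k + 1) = qint N * qbinom (N - 1) k := by
  have h1 := qint_ne k
  have h2 := qfact_ne k
  have h3 : qfact (k + 1) = qfact k * qint ((k : ℤ) + 1) := by
    unfold qfact; rw [Finset.prod_range_succ]
  unfold qbinom
  rw [h3, Finset.prod_range_succ']
  have h4 : ∀ s : ℕ, N - ((s + 1 : ℕ) : ℤ) = N - 1 - s := by intro s; push_cast; ring
  simp only [h4]
  field_simp
  simp

theorem vandermonde (k : ℕ) : ∀ m n : ℤ,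
    ∑ p ∈ Finset.HasAntidiagonal.antidiagonal k,
      v ^ (m * (p.2 : ℤ) - n * (p.1 : ℤ)) * qbinom m p.1 * qbinom n p.2 = qbinom (m + n) k := by
  induction k with
  | zero => intro m n; simp [qbinom_zero]
  | succ k ih =>
    intro m n
    apply mul_left_cancel₀ (qint_ne k)
    rw [qbinom_succ, Finset.mul_sum]
    have e1 : ∀ p ∈ Finset.HasAntidiagonal.antidiagonal (k + 1),
        qint ((k : ℤ) + 1) * (v ^ (m * (p.2 : ℤ) - n * (p.1 : ℤ)) * qbinom m p.1 * qbinom n p.2)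
        = v ^ ((m - 1) * (p.2 : ℤ) - n * (p.1 : ℤ)) * (qint p.1 * qbinom m p.1) * qbinom n p.2
        + v ^ (m * (p.2 : ℤ) - (n - 1) * (p.1 : ℤ)) * qbinom m p.1 * (qint p.2 * qbinom n p.2) := by
      intro p hp
      have hp' : (k : ℤ) + 1 = p.1 + p.2 := by
        have := Finset.HasAntidiagonal.mem_antidiagonal.mp hp
        exact_mod_cast this.symm
      rw [hp', qint_add,
        show (m - 1) * (p.2 : ℤ) - n * (p.1 : ℤ) = (m * p.2 - n * p.1) + -p.2 by ring,
        show m * (p.2 : ℤ) - (n - 1) * (p.1 : ℤ) = (m * p.2 - n * p.1) + p.1 by ring,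
        zpow_add₀ v_ne, zpow_add₀ v_ne]
      ring
    have q0 : qint 0 = 0 := by simp [qint]
    rw [Finset.sum_congr rfl e1, Finset.sum_add_distrib, Finset.Nat.sum_antidiagonal_succ,
      Finset.Nat.sum_antidiagonal_succ']
    simp only [Nat.cast_zero, q0, zero_mul, mul_zero, zero_add, add_zero, Nat.cast_add,
      Nat.cast_one, qbinom_succ]
    have a1 := ih (m - 1) n
    have a2 := ih m (n - 1)
    rw [qint_add m n, add_mul]
    rw [show m + n - 1 = (m - 1) + n by ring]
    nth_rewrite 1 [← a1]
    rw [show (m - 1) + n = m + (n - 1) by ring, ← a2, Finset.mul_sum, Finset.mul_sum]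
    congr 1
    · refine Finset.sum_congr rfl fun p _ => ?_
      rw [show (m - 1) * (p.2 : ℤ) - n * ((p.1 : ℤ) + 1)
        = -n + ((m - 1) * (p.2 : ℤ) - n * (p.1 : ℤ)) by ring, zpow_add₀ v_ne]
      ring
    · refine Finset.sum_congr rfl fun p _ => ?_
      rw [show m * ((p.2 : ℤ) + 1) - (n - 1) * (p.1 : ℤ)
        = m + (m * (p.2 : ℤ) - (n - 1) * (p.1 : ℤ)) by ring, zpow_add₀ v_ne]
      ring

theorem qbinom_mul (N : ℤ) (t s : ℕ) :
    qbinom N t * qbinom (N - t) s * (qfact t * qfact s) = qbinom N (t + s) * qfact (t + s) := by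
  have h1 := qfact_ne t
  have h2 := qfact_ne s
  have h3 := qfact_ne (t + s)
  unfold qbinom
  rw [Finset.prod_range_add]
  have h4 : ∀ x : ℕ, N - ((t + x : ℕ) : ℤ) = N - t - x := by intro s; push_cast; ring
  simp only [h4]
  field_simp

theorem qfact_split (c d : ℕ) :
    qbinom ((c + d : ℕ) : ℤ) c * (qfact c * qfact d) = qfact (c + d) := by
  induction c with
  | zero => simp [qbinom_zero, qfact]
  | succ c ih =>
    have h3 : ∀ k, qfact (k + 1) = qfact k * qint ((k : ℤ) + 1) := by
      intro k; unfold qfact; rw [Finset.prod_range_succ]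
    have h := qbinom_succ ((c + 1 + d : ℕ) : ℤ) c
    rw [show ((c + 1 + d : ℕ) : ℤ) - 1 = ((c + d : ℕ) : ℤ) by push_cast; ring] at h
    rw [show c + 1 + d = (c + d) + 1 by ring] at h ⊢
    rw [h3, h3, ← ih]
    rw [show (((c + d) + 1 : ℕ) : ℤ) = ((c + d : ℕ) : ℤ) + 1 by push_cast; ring] at h ⊢
    linear_combination qfact c * qfact d * h

theorem qbinom_big (t c : ℕ) (h : t < c) : qbinom (t : ℤ) c = 0 := by
  unfold qbinom
  rw [Finset.prod_eq_zero (Finset.mem_range.mpr h) (by simp [qint]), zero_div]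

theorem prod_formula (ν : ℤ) (t j : ℕ) :
    qbinom ν j * qbinom ν t = ∑ c ∈ Finset.range (min t j + 1),
      v ^ ((t : ℤ) * j - ν * c) * qbinom ν (t + j - c) * qtri c (t - c) (j - c) := by
  have h := vandermonde j t (ν - t)
  rw [show (t : ℤ) + (ν - t) = ν by ring, Finset.Nat.sum_antidiagonal_eq_sum_range_succ_mk] at h
  rw [← h, Finset.sum_mul]
  symm
  have hsub : Finset.range (min t j + 1) ⊆ Finset.range (j + 1) := by
    intro x; simp only [Finset.mem_range]; omega
  rw [← Finset.sum_subset hsub (f := fun c => v ^ ((t : ℤ) * ((j - c : ℕ) : ℤ) - (ν - t) * (c : ℤ)) *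
    qbinom t c * qbinom (ν - t) (j - c) * qbinom ν t)]
  · refine Finset.sum_congr rfl fun c hc => ?_
    have hc' : c ≤ t ∧ c ≤ j := by rw [Finset.mem_range] at hc; omega
    obtain ⟨⟨d, rfl⟩, ⟨s, rfl⟩⟩ := And.imp Nat.exists_eq_add_of_le Nat.exists_eq_add_of_le hc'
    have m1 := qbinom_mul ν (c + d) s
    have m2 := qfact_split c d
    rw [show c + d + (c + s) - c = c + d + s by omega, Nat.add_sub_cancel_left,
      Nat.add_sub_cancel_left]
    have hE : ((c + d : ℕ) : ℤ) * ((c + s : ℕ) : ℤ) - ν * c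
      = ((c + d : ℕ) : ℤ) * (s : ℤ) - (ν - ((c + d : ℕ) : ℤ)) * (c : ℤ) := by push_cast; ring
    rw [hE]
    have f1 := qfact_ne c
    have f2 := qfact_ne d
    have f3 := qfact_ne s
    have f4 := qfact_ne (c + d)
    have key : qbinom ν (c + d + s) * qtri c d s
        = qbinom ((c + d : ℕ) : ℤ) c * (qbinom ν (c + d) * qbinom (ν - ((c + d : ℕ) : ℤ)) s) := by
      unfold qtri
      rw [← mul_div_assoc, ← m1, ← m2]
      field_simp
    rw [mul_assoc, key]
    ring
  · intro c hc hc'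
    rw [Finset.mem_range] at hc hc'
    rw [qbinom_big t c (by omega)]
    ring

/-- The key identity in the proof of Lemma 3.5:
`[ν-t ∣ λ]·[ν ∣ t] = ∑_{j=0}^{λ} ∑_{c=0}^{min(t,j)}
   v^{ν(λ-j-c)+2jt} [-t ∣ λ-j] [ν ∣ t+j-c] [t+j-c ; c, t-c, j-c]`. -/
theorem lemma_3_5_key (ν : ℤ) (t lam : ℕ) :
    qbinom (ν - (t : ℤ)) lam * qbinom ν t =
      ∑ j ∈ Finset.range (lam + 1), ∑ c ∈ Finset.range (min t j + 1),
        v ^ (ν * ((lam : ℤ) - (j : ℤ) - (c : ℤ)) + 2 * (j : ℤ) * (t : ℤ)) *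
          qbinom (-(t : ℤ)) (lam - j) * qbinom ν (t + j - c) * qtri c (t - c) (j - c) := by
  rw [sub_eq_add_neg, ← vandermonde lam ν (-t), Finset.Nat.sum_antidiagonal_eq_sum_range_succ_mk,
    Finset.sum_mul]
  refine Finset.sum_congr rfl fun j hj => ?_
  have hj' : j ≤ lam := by rw [Finset.mem_range] at hj; omega
  have h := prod_formula ν t j
  simp only
  rw [show ∀ a b c d : K, a * b * c * d = a * c * (b * d) by intros; ring, h, Finset.mul_sum]
  refine Finset.sum_congr rfl fun c _ => ?_
  rw [Nat.cast_sub hj', show ν * ((lam : ℤ) - (j : ℤ) - (c : ℤ)) + 2 * (j : ℤ) * (t : ℤ)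
    = (ν * ((lam : ℤ) - j) - -(t : ℤ) * j) + ((t : ℤ) * j - ν * c) by ring, zpow_add₀ v_ne]
  ring
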